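/- arXiv:2201.00785 — 5 statements merged into one kernel-verified Lean document; each statement's English description precedes it below -/
import Mathlib

section
/- Let 0 < m < n and N ≥ 1. Let L be an m-dimensional linear subspace of ℝ^n, let x_1,…,x_N ∈ L, let ε_1,…,ε_N ∈ L^⊥, set x_k' = x_k + ε_k, and assume x_1',…,x_N' span ℝ^n. Consider the objective F(A,Q) = Σ_{k=1}^N ‖A Q^T x_k' − x_k‖² over pairs of matrices A, Q ∈ ℝ^{n×m} subject to Q^T Q = I_m. Then the minimum value of F is 0, and a feasible pair (A,Q) attains F(A,Q) = 0 if and only if A = Q and the columns of Q form an orthonormal basis of L. Consequently, the set of optimal encoders Q depends only on L and not on the perturbations ε_1,…,ε_N. -/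
open Matrix

/-!
If `F A Q = 0`, then `P = A * Qᵀ` sends every `x k + ε k` to `x k`. For `v ∈ L` the vectors `Pᵀ v`
and `v` have the same dot product with each `x k + ε k`, hence `Pᵀ` fixes `L`; as `P` takes values
in `L`, this gives `Pᵀ * P = P`, so `P` is symmetric and is the orthogonal projection onto `L`.
Then `L` is the column space of `P = Pᵀ = Q * Aᵀ`, hence that of `Q` by dimension, and
`A = A * Qᵀ * Q = P * Q = Q`.
-/

variable {ι κ σ R : Type*} [Fintype ι] [Fintype κ]

section OrthogonalProjection

variable [CommSemiring R] {L : Submodule R (ι → R)} {P : Matrix ι ι R}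

/-- `P` is the matrix of the orthogonal projection onto `L` for the dot product, encoded as a
symmetric matrix whose linear map is a projection onto `L`; this makes sense over any commutative
semiring, where `L` need not have an orthogonal complement. -/
structure IsOrthogonalProjectionMatrix (P : Matrix ι ι R) (L : Submodule R (ι → R)) : Prop where
  isSymm : P.IsSymm
  isProj : LinearMap.IsProj L P.mulVecLin

theorem eq_of_dotProduct_eq_of_span_eq_top {y : σ → ι → R}
    (hspan : Submodule.span R (Set.range y) = ⊤) {u v : ι → R}
    (h : ∀ k, u ⬝ᵥ y k = v ⬝ᵥ y k) : u = v := by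
  have hfun : dotProductBilin R R u = dotProductBilin R R v := LinearMap.ext_on_range hspan h
  exact dotProduct_eq u v (LinearMap.congr_fun hfun)

theorem IsOrthogonalProjectionMatrix.mulVec_add_eq (hP : IsOrthogonalProjectionMatrix P L)
    {u w : ι → R} (hu : u ∈ L) (hw : ∀ v ∈ L, v ⬝ᵥ w = 0) : P *ᵥ (u + w) = u := by
  have hPu : P *ᵥ u = u := hP.isProj.map_id u hu
  have hPw : P *ᵥ w = 0 := dotProduct_eq_zero _ fun v => by
    rw [dotProduct_comm, dotProduct_mulVec, ← mulVec_transpose, hP.isSymm.eq]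
    exact hw _ (hP.isProj.map_mem v)
  rw [mulVec_add, hPu, hPw, add_zero]

theorem isOrthogonalProjectionMatrix_of_transpose_mulVec_eq (hmem : ∀ w, P *ᵥ w ∈ L)
    (hfix : ∀ v ∈ L, Pᵀ *ᵥ v = v) : IsOrthogonalProjectionMatrix P L := by
  have hmul : Pᵀ * P = P := ext_iff_mulVec.mpr fun w => by
    rw [← mulVec_mulVec, hfix _ (hmem w)]
  have hsymm : P.IsSymm := hmul ▸ isSymm_transpose_mul_self P
  exact ⟨hsymm, hmem, fun v hv => by rw [mulVecLin_apply, ← hsymm.eq, hfix v hv]⟩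

theorem isOrthogonalProjectionMatrix_iff_forall_mulVec_add_eq {x ε : σ → ι → R}
    (hx : ∀ k, x k ∈ L) (hε : ∀ k, ∀ v ∈ L, v ⬝ᵥ ε k = 0)
    (hspan : Submodule.span R (Set.range (x + ε)) = ⊤) :
    IsOrthogonalProjectionMatrix P L ↔ ∀ k, P *ᵥ (x k + ε k) = x k := by
  refine ⟨fun hP k => hP.mulVec_add_eq (hx k) (hε k), fun h => ?_⟩
  have hrange : LinearMap.range P.mulVecLin ≤ L := by
    rw [LinearMap.range_eq_map, ← hspan, Submodule.map_span_le]
    rintro _ ⟨k, rfl⟩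
    rw [mulVecLin_apply, Pi.add_apply, h k]
    exact hx k
  refine isOrthogonalProjectionMatrix_of_transpose_mulVec_eq (fun w => hrange ⟨w, rfl⟩)
    fun v hv => eq_of_dotProduct_eq_of_span_eq_top hspan fun k => ?_
  calc (Pᵀ *ᵥ v) ⬝ᵥ (x k + ε k) = v ⬝ᵥ P *ᵥ (x k + ε k) := by
        rw [mulVec_transpose, dotProduct_mulVec]
    _ = v ⬝ᵥ x k := by rw [h k]
    _ = v ⬝ᵥ (x k + ε k) := by rw [dotProduct_add, hε k v hv, add_zero]

theorem isOrthogonalProjectionMatrix_mul_transpose [DecidableEq κ] {Q : Matrix ι κ R}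
    (hQ : Qᵀ * Q = 1) :
    IsOrthogonalProjectionMatrix (Q * Qᵀ) (LinearMap.range Q.mulVecLin) where
  isSymm := by rw [IsSymm, transpose_mul, transpose_transpose]
  isProj.map_mem w := ⟨Qᵀ *ᵥ w, by simp only [mulVecLin_apply, mulVec_mulVec]⟩
  isProj.map_id := by
    rintro _ ⟨y, rfl⟩
    simp only [mulVecLin_apply, mulVec_mulVec, Matrix.mul_assoc, hQ, Matrix.mul_one]

end OrthogonalProjection

theorem isOrthogonalProjectionMatrix_mul_transpose_iff {K : Type*} [Field K] [DecidableEq κ]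
    {L : Submodule K (ι → K)} (hL : Module.finrank K L = Fintype.card κ) {A Q : Matrix ι κ K}
    (hQ : Qᵀ * Q = 1) :
    IsOrthogonalProjectionMatrix (A * Qᵀ) L ↔ A = Q ∧ LinearMap.range Q.mulVecLin = L := by
  constructor
  · intro hP
    have hle : L ≤ LinearMap.range Q.mulVecLin := by
      have hP_eq : A * Qᵀ = Q * Aᵀ := by
        rw [← hP.isSymm.eq, transpose_mul, transpose_transpose]
      rw [← hP.isProj.range, hP_eq, mulVecLin_mul]
      exact LinearMap.range_comp_le_range _ _
    have hrange : L = LinearMap.range Q.mulVecLin :=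
      Submodule.eq_of_le_of_finrank_le hle (hL ▸ Q.rank_le_card_width)
    have hPQ : A * Qᵀ * Q = Q := ext_iff_mulVec.mpr fun w => by
      rw [← mulVec_mulVec]
      exact hP.isProj.map_id _ (hrange ▸ ⟨w, rfl⟩)
    exact ⟨by rwa [Matrix.mul_assoc, hQ, Matrix.mul_one] at hPQ, hrange.symm⟩
  · rintro ⟨rfl, rfl⟩
    exact isOrthogonalProjectionMatrix_mul_transpose hQ

theorem exists_transpose_mul_self_eq_one_range_eq [DecidableEq κ] {L : Submodule ℝ (ι → ℝ)}
    (hL : Module.finrank ℝ L = Fintype.card κ) :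
    ∃ Q : Matrix ι κ ℝ, Qᵀ * Q = 1 ∧ LinearMap.range Q.mulVecLin = L := by
  let e := WithLp.linearEquiv 2 ℝ (ι → ℝ)
  let E : Submodule ℝ (EuclideanSpace ℝ ι) := L.comap e.toLinearMap
  have hE : Module.finrank ℝ E = Fintype.card κ := by
    rw [← hL]
    exact (e.ofSubmodule' L).finrank_eq
  let b : OrthonormalBasis κ ℝ E :=
    (stdOrthonormalBasis ℝ E).reindex (Fintype.equivFinOfCardEq hE.symm).symm
  let Q : Matrix ι κ ℝ := of fun i j => (b j : EuclideanSpace ℝ ι) i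
  have hQ : Qᵀ * Q = 1 := by
    ext i j
    have hij := orthonormal_iff_ite.mp b.orthonormal i j
    rw [Submodule.coe_inner, EuclideanSpace.inner_eq_star_dotProduct, star_trivial,
      dotProduct_comm] at hij
    rwa [one_apply]
  have hrange : LinearMap.range Q.mulVecLin ≤ L := by
    rw [range_mulVecLin, Submodule.span_le]
    rintro _ ⟨j, rfl⟩
    exact (b j).2
  have hrank : Q.rank = Fintype.card κ := by
    rw [← rank_transpose_mul_self, hQ, rank_one]
  exact ⟨Q, hQ, Submodule.eq_of_le_of_finrank_eq hrange (hrank.trans hL.symm)⟩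

section SumOfSquares

variable [Ring R] [LinearOrder R] [IsStrictOrderedRing R]

theorem dotProduct_self_nonneg (v : ι → R) : 0 ≤ v ⬝ᵥ v :=
  Fintype.sum_nonneg fun i => mul_self_nonneg (v i)

theorem sum_dotProduct_self_eq_zero_iff [Fintype σ] {v : σ → ι → R} :
    ∑ k, v k ⬝ᵥ v k = 0 ↔ ∀ k, v k = 0 := by
  simp only [Finset.sum_eq_zero_iff_of_nonneg fun k _ => dotProduct_self_nonneg (v k),
    Finset.mem_univ, true_imp_iff, dotProduct_self_eq_zero]

end SumOfSquares

/-- Linear model of the Implicit AutoEncoder: reconstructing the clean points `x k`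
from the perturbed points `x' k = x k + ε k` (with `ε k ⊥ L`), the minimum of the
objective `F` over encoder/decoder pairs `(A, Q)` with `Qᵀ * Q = 1` is `0`, and a
feasible pair attains `0` iff `A = Q` and the columns of `Q` form an orthonormal
basis of `L` (orthonormality being `Qᵀ * Q = 1`, spanning being
`LinearMap.range Q.mulVecLin = L`). In particular the optimal encoders depend only
on `L`, not on the perturbations. -/
theorem stmt_0 (n m N : ℕ) (hm : 0 < m) (hmn : m < n) (hN : 1 ≤ N)
    (L : Submodule ℝ (Fin n → ℝ)) (hL : Module.finrank ℝ L = m)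
    (x ε x' : Fin N → Fin n → ℝ)
    (hx : ∀ k, x k ∈ L)
    (hε : ∀ k, ∀ v ∈ L, v ⬝ᵥ ε k = 0)
    (hx' : ∀ k, x' k = x k + ε k)
    (hspan : Submodule.span ℝ (Set.range x') = ⊤)
    (F : Matrix (Fin n) (Fin m) ℝ → Matrix (Fin n) (Fin m) ℝ → ℝ)
    (hF : ∀ A Q, F A Q =
      ∑ k, ((A * Qᵀ).mulVec (x' k) - x k) ⬝ᵥ ((A * Qᵀ).mulVec (x' k) - x k)) :
    IsLeast {r | ∃ A Q : Matrix (Fin n) (Fin m) ℝ, Qᵀ * Q = 1 ∧ F A Q = r} 0 ∧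
    ∀ A Q : Matrix (Fin n) (Fin m) ℝ, Qᵀ * Q = 1 →
      (F A Q = 0 ↔ A = Q ∧ LinearMap.range Q.mulVecLin = L) := by
  obtain rfl : x' = x + ε := funext hx'
  have hL_card : Module.finrank ℝ L = Fintype.card (Fin m) := hL.trans (Fintype.card_fin m).symm
  have hiff : ∀ A Q : Matrix (Fin n) (Fin m) ℝ, Qᵀ * Q = 1 →
      (F A Q = 0 ↔ A = Q ∧ LinearMap.range Q.mulVecLin = L) := fun A Q hQ => calc
    F A Q = 0 ↔ ∀ k, (A * Qᵀ) *ᵥ (x k + ε k) = x k := by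
      simp only [hF, sum_dotProduct_self_eq_zero_iff, sub_eq_zero, Pi.add_apply]
    _ ↔ IsOrthogonalProjectionMatrix (A * Qᵀ) L :=
      (isOrthogonalProjectionMatrix_iff_forall_mulVec_add_eq hx hε hspan).symm
    _ ↔ A = Q ∧ LinearMap.range Q.mulVecLin = L :=
      isOrthogonalProjectionMatrix_mul_transpose_iff hL_card hQ
  refine ⟨⟨?_, ?_⟩, hiff⟩
  · obtain ⟨Q, hQ, hrange⟩ := exists_transpose_mul_self_eq_one_range_eq hL_card
    exact ⟨Q, Q, hQ, (hiff Q Q hQ).mpr ⟨rfl, hrange⟩⟩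
  · rintro _ ⟨A, Q, -, rfl⟩
    exact hF A Q ▸ Fintype.sum_nonneg fun k => dotProduct_self_nonneg _
end

section
/- Let L be a linear subspace of ℝ^n, let x_1,…,x_N ∈ L, let ε_1,…,ε_N ∈ L^⊥, and set x_k' = x_k + ε_k. Define C = Σ_{k=1}^N x_k (x_k')^T and M = Σ_{k=1}^N x_k x_k^T. Then: (i) the column spaces of C and of M are contained in L; (ii) C v = M v for every v ∈ L; (iii) for every real λ ≠ 0 and v ∈ ℝ^n, C v = λ v if and only if M v = λ v. In particular, the eigenvectors of C with nonzero eigenvalue coincide with those of the clean covariance M, and hence are independent of the perturbations ε_1,…,ε_N. -/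
open Matrix

/-!
Both `C` and `M` map everything into `L`, and they agree on `L` because `ε k` pairs to zero with
`L`. If either of them sends `v` to an invertible multiple of `v`, then `v` itself lies in `L`,
where the two act alike.
-/

section OuterProductSums

variable {ι m n R : Type*} [Fintype ι] [Fintype n] [CommSemiring R]

theorem sum_vecMulVec_mulVec (a : ι → m → R) (b : ι → n → R) (v : n → R) :
    (∑ k, vecMulVec (a k) (b k)) *ᵥ v = ∑ k, (b k ⬝ᵥ v) • a k := by
  simp only [sum_mulVec, vecMulVec_mulVec, op_smul_eq_smul]

theorem range_mulVecLin_sum_vecMulVec_le {L : Submodule R (m → R)} {a : ι → m → R}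
    (ha : ∀ k, a k ∈ L) (b : ι → n → R) :
    LinearMap.range (∑ k, vecMulVec (a k) (b k)).mulVecLin ≤ L := by
  rintro _ ⟨v, rfl⟩
  rw [mulVecLin_apply, sum_vecMulVec_mulVec]
  exact L.sum_mem fun k _ => L.smul_mem _ (ha k)

theorem sum_vecMulVec_add_mulVec_of_dotProduct_eq_zero (a : ι → m → R) (b : ι → n → R)
    {c : ι → n → R} {v : n → R} (hc : ∀ k, c k ⬝ᵥ v = 0) :
    (∑ k, vecMulVec (a k) (b k + c k)) *ᵥ v = (∑ k, vecMulVec (a k) (b k)) *ᵥ v := by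
  simp only [sum_vecMulVec_mulVec, add_dotProduct, hc, add_zero]

end OuterProductSums

theorem apply_eq_smul_iff_of_range_subset_of_eqOn {R V : Type*} [Semiring R] [AddCommMonoid V]
    [Module R V] {L : Submodule R V} {f g : V → V} (hf : Set.range f ⊆ L) (hg : Set.range g ⊆ L)
    (hfg : Set.EqOn f g L) {c : R} (hc : IsUnit c) (v : V) :
    f v = c • v ↔ g v = c • v := by
  constructor
  · intro h
    have hv : v ∈ L := (L.smul_mem_iff_of_isUnit hc).mp (h ▸ hf ⟨v, rfl⟩)
    rwa [← hfg hv]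
  · intro h
    have hv : v ∈ L := (L.smul_mem_iff_of_isUnit hc).mp (h ▸ hg ⟨v, rfl⟩)
    rwa [hfg hv]

theorem stmt_1_general {ι n R : Type*} [Fintype ι] [Fintype n] [CommSemiring R]
    (L : Submodule R (n → R))
    (x ε x' : ι → n → R)
    (hx : ∀ k, x k ∈ L)
    (hε : ∀ k, ∀ v ∈ L, v ⬝ᵥ ε k = 0)
    (hx' : ∀ k, x' k = x k + ε k)
    (C M : Matrix n n R)
    (hC : C = ∑ k, vecMulVec (x k) (x' k))
    (hM : M = ∑ k, vecMulVec (x k) (x k)) :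
    (LinearMap.range C.mulVecLin ≤ L ∧ LinearMap.range M.mulVecLin ≤ L) ∧
    (∀ v ∈ L, C *ᵥ v = M *ᵥ v) ∧
    (∀ lam : R, IsUnit lam → ∀ v : n → R, (C *ᵥ v = lam • v ↔ M *ᵥ v = lam • v)) := by
  obtain rfl : x' = fun k => x k + ε k := funext hx'
  have range_C_le : LinearMap.range C.mulVecLin ≤ L :=
    hC ▸ range_mulVecLin_sum_vecMulVec_le hx _
  have range_M_le : LinearMap.range M.mulVecLin ≤ L :=
    hM ▸ range_mulVecLin_sum_vecMulVec_le hx _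
  have eqOn_L : ∀ v ∈ L, C *ᵥ v = M *ᵥ v := by
    intro v hv
    rw [hC, hM, sum_vecMulVec_add_mulVec_of_dotProduct_eq_zero]
    exact fun k => (dotProduct_comm _ _).trans (hε k v hv)
  exact ⟨⟨range_C_le, range_M_le⟩, eqOn_L, fun _ hlam v =>
    apply_eq_smul_iff_of_range_subset_of_eqOn (f := C.mulVecLin) (g := M.mulVecLin)
      range_C_le range_M_le eqOn_L hlam v⟩

/-- The cross-covariance `C = Σ x_k (x'_k)ᵀ` between clean points `x_k ∈ L` and
perturbed points `x'_k = x_k + ε_k` (with `ε_k ⊥ L`) satisfies: (i) the column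
spaces of `C` and of the clean covariance `M = Σ x_k x_kᵀ` are contained in `L`;
(ii) `C v = M v` for every `v ∈ L`; (iii) for every `λ ≠ 0`, `v` is a
`λ`-eigenvector of `C` iff it is one of `M`.  Hence the nonzero-eigenvalue
eigenvectors of `C` are independent of the perturbations. -/
theorem stmt_1 (n N : ℕ)
    (L : Submodule ℝ (Fin n → ℝ))
    (x ε x' : Fin N → Fin n → ℝ)
    (hx : ∀ k, x k ∈ L)
    (hε : ∀ k, ∀ v ∈ L, v ⬝ᵥ ε k = 0)
    (hx' : ∀ k, x' k = x k + ε k)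
    (C M : Matrix (Fin n) (Fin n) ℝ)
    (hC : C = ∑ k, vecMulVec (x k) (x' k))
    (hM : M = ∑ k, vecMulVec (x k) (x k)) :
    (LinearMap.range C.mulVecLin ≤ L ∧ LinearMap.range M.mulVecLin ≤ L) ∧
    (∀ v ∈ L, C.mulVec v = M.mulVec v) ∧
    (∀ lam : ℝ, lam ≠ 0 → ∀ v : Fin n → ℝ,
      (C.mulVec v = lam • v ↔ M.mulVec v = lam • v)) := by
  simpa only [isUnit_iff_ne_zero] using stmt_1_general L x ε x' hx hε hx' C M hC hM
end

section
/- (Eckart–Young, Frobenius norm.) Let Y ∈ ℝ^{n×N} and let λ_1 ≥ … ≥ λ_n ≥ 0 be the eigenvalues of the symmetric positive semidefinite matrix Y Y^T. Then for every 0 ≤ m ≤ n, the infimum of ‖Y − Z‖_F² over all matrices Z ∈ ℝ^{n×N} of rank at most m equals λ_{m+1} + … + λ_n, and it is attained by Z = P Y where P is the orthogonal projection onto a sum of eigenspaces of Y Y^T for the eigenvalues λ_1,…,λ_m. -/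
open Matrix

/-!
If `P` is the orthogonal projection onto the column space of `Z`, then `(1 - P)(Y - Z) = Y - P Y`,
so Pythagoras gives `‖Y - Z‖² ≥ ‖Y - P Y‖² = ‖Y‖² - tr (P Y Yᴴ)`. For `Y Yᴴ = V diag(λ) Vᴴ` the
trace is `∑ dᵢ λᵢ`, where `dᵢ = ‖P vᵢ‖² ∈ [0, 1]` and `∑ dᵢ ≤ rank P` because the columns `vᵢ` of
`V` are orthonormal; such a sum is at most that of the `rank Z` largest eigenvalues (Ky Fan).
Equality holds when `P` projects onto the corresponding eigenvectors.
-/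

namespace EckartYoung

open Finset RCLike
open scoped Matrix.Norms.Frobenius ComplexOrder MatrixOrder

variable {𝕜 ι κ σ τ : Type*} [RCLike 𝕜] [Fintype ι] [Fintype κ] [Fintype σ] [Fintype τ]

section MatrixAlgebra

variable {R : Type*}

theorem mul_eq_mul_diagonal_iff [CommSemiring R] [DecidableEq τ] {A : Matrix ι ι R}
    {Q : Matrix ι τ R} {μ : τ → R} :
    A * Q = Q * diagonal μ ↔ ∀ t, A *ᵥ Q.col t = μ t • Q.col t := by
  simp only [← Matrix.ext_iff, funext_iff, mul_diagonal, mul_comm _ (μ _)]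
  exact forall_comm

theorem eq_mul_mul_of_mul_eq_mul [CommRing R] [DecidableEq ι] {A D V W : Matrix ι ι R}
    (hWV : W * V = 1) (h : A * V = V * D) : A = V * D * W := by
  rw [← h, Matrix.mul_assoc, mul_eq_one_comm.1 hWV, Matrix.mul_one]

theorem conjTranspose_submatrix_mul_submatrix_eq_one {σ τ : Type*} [NonAssocSemiring R] [Star R]
    [DecidableEq σ] [DecidableEq τ] {V : Matrix ι σ R} (hV : Vᴴ * V = 1) (e : τ ↪ σ) :
    (V.submatrix id e)ᴴ * V.submatrix id e = 1 := by
  rw [conjTranspose_submatrix, ← submatrix_mul _ _ _ _ _ Function.bijective_id, hV,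
    submatrix_one_embedding]

theorem isStarProjection_mul_conjTranspose [Semiring R] [StarRing R] [DecidableEq σ]
    {Q : Matrix ι σ R} (hQ : Qᴴ * Q = 1) : IsStarProjection (Q * Qᴴ) where
  isIdempotentElem := by
    rw [IsIdempotentElem, Matrix.mul_assoc, ← Matrix.mul_assoc Qᴴ, hQ, Matrix.one_mul]
  isSelfAdjoint := isHermitian_mul_conjTranspose_self Q

theorem trace_eq_rank_of_isIdempotentElem [Field R] {P : Matrix ι ι R}
    (hP : IsIdempotentElem P) : P.trace = P.rank := by
  classical
  have hlin : IsIdempotentElem (toLin' P) := hP.map (toLinAlgEquiv' (R := R))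
  rw [← trace_toLin'_eq, (LinearMap.IsIdempotentElem.isProj_range _ hlin).trace]
  rfl

end MatrixAlgebra

section Frobenius

theorem frobenius_norm_sq {E : Type*} [SeminormedAddCommGroup E] (A : Matrix ι κ E) :
    ‖A‖ ^ 2 = ∑ i, ∑ j, ‖A i j‖ ^ 2 := by
  rw [frobenius_norm_def, ← Real.sqrt_eq_rpow, Real.sq_sqrt (by positivity)]
  simp only [Real.rpow_two]

theorem frobenius_norm_sq_eq_re_trace (A : Matrix ι κ 𝕜) :
    ‖A‖ ^ 2 = re (A * Aᴴ).trace := by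
  simp only [frobenius_norm_sq, trace, diag_apply, mul_apply, conjTranspose_apply, star_def,
    mul_conj, map_sum, ← ofReal_pow, ofReal_re]

variable {P : Matrix ι ι 𝕜} (hP : IsStarProjection P) (M : Matrix ι κ 𝕜)
include hP

theorem frobenius_norm_sq_isStarProjection_mul :
    ‖P * M‖ ^ 2 = re (P * (M * Mᴴ)).trace := by
  rw [frobenius_norm_sq_eq_re_trace, conjTranspose_mul, hP.isSelfAdjoint.isHermitian.eq,
    ← Matrix.mul_assoc, trace_mul_comm, ← Matrix.mul_assoc, ← Matrix.mul_assoc,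
    hP.isIdempotentElem.eq, Matrix.mul_assoc]

theorem frobenius_norm_sq_sub_isStarProjection_mul :
    ‖M - P * M‖ ^ 2 = ‖M‖ ^ 2 - re (P * (M * Mᴴ)).trace := by
  classical
  have h := frobenius_norm_sq_isStarProjection_mul hP.one_sub M
  rwa [Matrix.sub_mul, Matrix.sub_mul, Matrix.one_mul, Matrix.one_mul, trace_sub, map_sub,
    ← frobenius_norm_sq_eq_re_trace] at h

theorem frobenius_norm_sub_isStarProjection_mul_le : ‖M - P * M‖ ≤ ‖M‖ := by
  refine (pow_le_pow_iff_left₀ (norm_nonneg _) (norm_nonneg _) two_ne_zero).1 ?_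
  rw [frobenius_norm_sq_sub_isStarProjection_mul hP, ← frobenius_norm_sq_isStarProjection_mul hP]
  exact sub_le_self _ (sq_nonneg _)

end Frobenius

section ColumnSpace

theorem rank_eq_finrank_range_toEuclideanLin {ι : Type*} [Finite ι] [DecidableEq κ]
    (A : Matrix ι κ 𝕜) : A.rank = Module.finrank 𝕜 (toEuclideanLin A).range :=
  have := Fintype.ofFinite ι
  rank_eq_finrank_range_toLin A (EuclideanSpace.basisFun ι 𝕜).toBasis
    (EuclideanSpace.basisFun κ 𝕜).toBasis

variable [DecidableEq ι] [DecidableEq κ] (Z : Matrix ι κ 𝕜)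

/-- The matrix of the orthogonal projection onto the column space of `Z`. -/
noncomputable def colProj : Matrix ι ι 𝕜 :=
  (toEuclideanCLM (n := ι) (𝕜 := 𝕜)).symm (toEuclideanLin Z).range.starProjection

theorem isStarProjection_colProj : IsStarProjection (colProj Z) :=
  isStarProjection_starProjection.map (toEuclideanCLM (n := ι) (𝕜 := 𝕜)).symm

theorem toEuclideanLin_colProj :
    toEuclideanLin (colProj Z) = (toEuclideanLin Z).range.starProjection := by
  rw [← coe_toEuclideanCLM_eq_toEuclideanLin, colProj, StarAlgEquiv.apply_symm_apply]

theorem colProj_mul_self : colProj Z * Z = Z := by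
  apply toEuclideanLin.injective
  rw [toLpLin_mul_same, toEuclideanLin_colProj]
  ext1 v
  exact Submodule.starProjection_eq_self_iff.2 (LinearMap.mem_range_self _ v)

theorem rank_colProj : (colProj Z).rank = Z.rank := by
  rw [rank_eq_finrank_range_toEuclideanLin, toEuclideanLin_colProj,
    rank_eq_finrank_range_toEuclideanLin, Submodule.range_starProjection]

end ColumnSpace

section WeightedSum

theorem exists_nonneg_threshold {R σ : Type*} [Zero R] [LinearOrder R] [Finite σ]
    {lam : σ → R} {S : Finset σ} (hlam : 0 ≤ lam) (hS : ∀ i ∈ S, ∀ j ∉ S, lam j ≤ lam i) :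
    ∃ c, 0 ≤ c ∧ (∀ i ∈ S, c ≤ lam i) ∧ ∀ j ∉ S, lam j ≤ c := by
  classical
  have := Fintype.ofFinite σ
  rcases Sᶜ.eq_empty_or_nonempty with hempty | hne
  · rw [compl_eq_empty_iff] at hempty
    exact ⟨0, le_rfl, fun i _ => hlam i, fun j hj => absurd (hempty ▸ mem_univ j) hj⟩
  · obtain ⟨k, hk, hmax⟩ := exists_max_image Sᶜ lam hne
    simp only [mem_compl] at hk hmax
    exact ⟨lam k, hlam k, fun i hi => hS i hi k hk, hmax⟩

theorem sum_mul_le_sum_of_sum_le_card {R : Type*} [CommRing R] [LinearOrder R]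
    [IsStrictOrderedRing R] {lam d : σ → R} {S : Finset σ} (hlam : 0 ≤ lam)
    (hS : ∀ i ∈ S, ∀ j ∉ S, lam j ≤ lam i)
    (hd₀ : 0 ≤ d) (hd₁ : d ≤ 1) (hd : ∑ i, d i ≤ #S) :
    ∑ i, d i * lam i ≤ ∑ i ∈ S, lam i := by
  classical
  obtain ⟨c, hc, hcS, hSc⟩ := exists_nonneg_threshold hlam hS
  have hterm (i : σ) : d i * (lam i - c) ≤ if i ∈ S then lam i - c else 0 := by
    split_ifs with hi
    · exact mul_le_of_le_one_left (sub_nonneg.2 (hcS i hi)) (hd₁ i)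
    · exact mul_nonpos_of_nonneg_of_nonpos (hd₀ i) (sub_nonpos.2 (hSc i hi))
  calc ∑ i, d i * lam i = ∑ i, d i * (lam i - c) + (∑ i, d i) * c := by
        rw [sum_mul, ← sum_add_distrib]
        exact sum_congr rfl fun i _ => by ring
    _ ≤ (∑ i, if i ∈ S then lam i - c else 0) + #S * c := by
        gcongr with i
        exact hterm i
    _ = ∑ i ∈ S, lam i := by
        rw [sum_ite_mem, univ_inter, sum_sub_distrib, sum_const, nsmul_eq_mul, sub_add_cancel]

end WeightedSum

section KyFan

/-- The squared length of the projection by `P` of the `i`-th column of `V`, written as a diagonal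
entry of the compression `Vᴴ P V` so that it is linear in `P`. -/
def projWeight (P : Matrix ι ι 𝕜) (V : Matrix ι σ 𝕜) (i : σ) : ℝ :=
  re ((Vᴴ * P * V) i i)

theorem sum_projWeight (P : Matrix ι ι 𝕜) (V : Matrix ι σ 𝕜) :
    ∑ i, projWeight P V i = re (V * Vᴴ * P).trace := by
  rw [Matrix.mul_assoc, trace_mul_comm, trace, map_sum]
  rfl

theorem re_trace_mul_eq_sum_projWeight [DecidableEq σ] (P : Matrix ι ι 𝕜) (V : Matrix ι σ 𝕜)
    (lam : σ → ℝ) :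
    re (P * (V * diagonal (fun i => (lam i : 𝕜)) * Vᴴ)).trace =
      ∑ i, projWeight P V i * lam i := by
  rw [← Matrix.mul_assoc, trace_mul_comm, ← Matrix.mul_assoc, ← Matrix.mul_assoc]
  simp only [trace, diag_apply, mul_diagonal, map_sum, re_mul_ofReal, projWeight]

variable {P : Matrix ι ι 𝕜} (hP : IsStarProjection P)
include hP

theorem projWeight_nonneg {σ : Type*} [Finite σ] (V : Matrix ι σ 𝕜) : 0 ≤ projWeight P V :=
  fun _ => (RCLike.nonneg_iff.1 (hP.nonneg.posSemidef.conjTranspose_mul_mul_same V).diag_nonneg).1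

theorem projWeight_le_one {σ : Type*} [Finite σ] [DecidableEq σ] {V : Matrix ι σ 𝕜}
    (hV : Vᴴ * V = 1) : projWeight P V ≤ 1 := by
  classical
  intro i
  have h : 0 ≤ re ((Vᴴ * (1 - P) * V : Matrix σ σ 𝕜) i i) := projWeight_nonneg hP.one_sub V i
  rw [Matrix.mul_sub, Matrix.mul_one, Matrix.sub_mul, hV, Matrix.sub_apply, one_apply_eq, map_sub,
    one_re, sub_nonneg] at h
  exact h

variable [DecidableEq σ] {V : Matrix ι σ 𝕜} (hV : Vᴴ * V = 1) {lam : σ → ℝ}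
include hV

theorem sum_projWeight_le_rank : ∑ i, projWeight P V i ≤ P.rank := by
  have hgram : P * Pᴴ = P := by
    rw [hP.isSelfAdjoint.isHermitian.eq, hP.isIdempotentElem.eq]
  have hrank : ‖P‖ ^ 2 = P.rank := by
    rw [frobenius_norm_sq_eq_re_trace, hgram,
      trace_eq_rank_of_isIdempotentElem hP.isIdempotentElem, natCast_re]
  have hpyth :=
    frobenius_norm_sq_sub_isStarProjection_mul (isStarProjection_mul_conjTranspose hV) P
  rw [hgram, hrank, ← sum_projWeight] at hpyth
  exact sub_nonneg.1 (hpyth ▸ sq_nonneg _)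

theorem re_trace_mul_le_sum (hlam : 0 ≤ lam) {S : Finset σ}
    (hS : ∀ i ∈ S, ∀ j ∉ S, lam j ≤ lam i) (hrank : P.rank ≤ #S) :
    re (P * (V * diagonal (fun i => (lam i : 𝕜)) * Vᴴ)).trace ≤ ∑ i ∈ S, lam i := by
  rw [re_trace_mul_eq_sum_projWeight]
  exact sum_mul_le_sum_of_sum_le_card hlam hS (projWeight_nonneg hP V) (projWeight_le_one hP hV)
    ((sum_projWeight_le_rank hP hV).trans (by exact_mod_cast hrank))

end KyFan

section SpectralDecomposition

variable [DecidableEq σ] {Y : Matrix ι κ 𝕜} {V : Matrix ι σ 𝕜} {lam : σ → ℝ} (hV : Vᴴ * V = 1)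
  (hY : Y * Yᴴ = V * diagonal (fun i => (lam i : 𝕜)) * Vᴴ)
include hV hY

theorem eigenvalues_nonneg : 0 ≤ lam := by
  have hdiag : Vᴴ * (Y * Yᴴ) * V = diagonal fun i => (lam i : 𝕜) := by
    rw [hY, ← Matrix.mul_assoc, ← Matrix.mul_assoc, hV, Matrix.one_mul, Matrix.mul_assoc, hV,
      Matrix.mul_one]
  have hpos := (posSemidef_self_mul_conjTranspose Y).conjTranspose_mul_mul_same V
  rw [hdiag, posSemidef_diagonal_iff] at hpos
  exact fun i => ofReal_nonneg.1 (hpos i)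

theorem frobenius_norm_sq_eq_sum_eigenvalues : ‖Y‖ ^ 2 = ∑ i, lam i := by
  rw [frobenius_norm_sq_eq_re_trace, hY, trace_mul_comm, ← Matrix.mul_assoc, hV, Matrix.one_mul,
    trace_diagonal, map_sum]
  simp only [ofReal_re]

theorem sum_compl_le_frobenius_norm_sq_sub {S : Finset σ}
    (hS : ∀ i ∈ S, ∀ j ∉ S, lam j ≤ lam i) {Z : Matrix ι κ 𝕜} (hZ : Z.rank ≤ #S) :
    ∑ i ∈ Sᶜ, lam i ≤ ‖Y - Z‖ ^ 2 := by
  classical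
  have hP := isStarProjection_colProj Z
  have hkyFan : re (colProj Z * (Y * Yᴴ)).trace ≤ ∑ i ∈ S, lam i := by
    rw [hY]
    exact re_trace_mul_le_sum hP hV (eigenvalues_nonneg hV hY) hS ((rank_colProj Z).trans_le hZ)
  have hresidual : Y - colProj Z * Y = Y - Z - colProj Z * (Y - Z) := by
    rw [Matrix.mul_sub, colProj_mul_self, sub_sub_sub_cancel_right]
  calc ∑ i ∈ Sᶜ, lam i = ‖Y‖ ^ 2 - ∑ i ∈ S, lam i := by
        rw [frobenius_norm_sq_eq_sum_eigenvalues hV hY, ← sum_compl_add_sum S,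
          add_sub_cancel_right]
    _ ≤ ‖Y‖ ^ 2 - re (colProj Z * (Y * Yᴴ)).trace := by gcongr
    _ = ‖Y - Z - colProj Z * (Y - Z)‖ ^ 2 := by
        rw [← hresidual, frobenius_norm_sq_sub_isStarProjection_mul hP]
    _ ≤ ‖Y - Z‖ ^ 2 := by
        gcongr
        exact frobenius_norm_sub_isStarProjection_mul_le hP _

theorem frobenius_norm_sq_sub_eigenprojection [DecidableEq τ] (e : τ ↪ σ) {Q : Matrix ι τ 𝕜}
    (hQ : Qᴴ * Q = 1) (hYQ : ∀ t, (Y * Yᴴ) *ᵥ Q.col t = (lam (e t) : 𝕜) • Q.col t) :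
    ‖Y - Q * Qᴴ * Y‖ ^ 2 = ∑ i ∈ (univ.map e)ᶜ, lam i := by
  have htrace : re (Q * Qᴴ * (Y * Yᴴ)).trace = ∑ i ∈ univ.map e, lam i := by
    rw [trace_mul_comm, ← Matrix.mul_assoc, mul_eq_mul_diagonal_iff.2 hYQ, trace_mul_comm,
      ← Matrix.mul_assoc, hQ, Matrix.one_mul, trace_diagonal, map_sum, sum_map]
    simp only [ofReal_re]
  rw [frobenius_norm_sq_sub_isStarProjection_mul (isStarProjection_mul_conjTranspose hQ), htrace,
    frobenius_norm_sq_eq_sum_eigenvalues hV hY, ← sum_compl_add_sum (univ.map e),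
    add_sub_cancel_right]

end SpectralDecomposition

theorem compl_map_castLEEmb {m n : ℕ} (h : m ≤ n) :
    (univ.map (Fin.castLEEmb h))ᶜ = univ.filter fun i : Fin n => m ≤ (i : ℕ) := by
  ext i
  rw [mem_compl, ← mem_coe, coe_map, coe_univ, Set.image_univ, Fin.coe_castLEEmb, Fin.range_castLE]
  simp

end EckartYoung

open EckartYoung
open scoped Matrix.Norms.Frobenius

/-- `e` enumerates the indices of the largest eigenvalues. As `V` may have fewer columns than rows,
`lam` may leave out eigenvalues of `Y * Yᴴ` that are zero. -/
theorem stmt_4_general {𝕜 ι κ σ τ : Type*} [RCLike 𝕜] [Fintype ι] [Fintype κ] [Fintype σ]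
    [Fintype τ] [DecidableEq σ] [DecidableEq τ] (Y : Matrix ι κ 𝕜) (V : Matrix ι σ 𝕜)
    (hV : Vᴴ * V = 1) (lam : σ → ℝ) (hY : Y * Yᴴ = V * diagonal (fun i => (lam i : 𝕜)) * Vᴴ)
    (e : τ ↪ σ) (he : ∀ t, ∀ i ∈ (Finset.univ.map e)ᶜ, lam i ≤ lam (e t)) :
    IsLeast {r | ∃ Z : Matrix ι κ 𝕜, Z.rank ≤ Fintype.card τ ∧ r = ‖Y - Z‖ ^ 2}
      (∑ i ∈ (Finset.univ.map e)ᶜ, lam i) ∧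
    ∀ Q : Matrix ι τ 𝕜, Qᴴ * Q = 1 →
      (∀ t, (Y * Yᴴ) *ᵥ Q.col t = (lam (e t) : 𝕜) • Q.col t) →
      (Q * Qᴴ * Y).rank ≤ Fintype.card τ ∧
      ‖Y - Q * Qᴴ * Y‖ ^ 2 = ∑ i ∈ (Finset.univ.map e)ᶜ, lam i := by
  have hrank (Q : Matrix ι τ 𝕜) : (Q * Qᴴ * Y).rank ≤ Fintype.card τ := by
    rw [Matrix.mul_assoc]
    exact (rank_mul_le_left _ _).trans (rank_le_card_width Q)
  have heigen : ∀ i, (Y * Yᴴ) *ᵥ V.col i = (lam i : 𝕜) • V.col i :=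
    mul_eq_mul_diagonal_iff.1 (by rw [hY, Matrix.mul_assoc, hV, Matrix.mul_one])
  refine ⟨⟨⟨_, hrank (V.submatrix id e), ?_⟩, ?_⟩, fun Q hQ hYQ => ⟨hrank Q, ?_⟩⟩
  · exact (frobenius_norm_sq_sub_eigenprojection hV hY e
      (conjTranspose_submatrix_mul_submatrix_eq_one hV e) fun t => heigen (e t)).symm
  · rintro _ ⟨Z, hZ, rfl⟩
    exact sum_compl_le_frobenius_norm_sq_sub hV hY (by simpa using he) (by simpa using hZ)
  · exact frobenius_norm_sq_sub_eigenprojection hV hY e hQ hYQ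

/-- Eckart–Young (Frobenius norm): for `Y ∈ ℝ^{n×N}` with `Y Yᵀ` having eigenvalues
`λ_1 ≥ ... ≥ λ_n ≥ 0` (encoded by an orthogonal diagonalization), and any `m ≤ n`,
the least value of `‖Y − Z‖_F²` over matrices `Z` of rank at most `m` is
`λ_{m+1} + ... + λ_n`, and it is attained by `Z = P Y` where `P = Q₀ Q₀ᵀ` is the
orthogonal projection onto the span of `m` orthonormal eigenvectors of `Y Yᵀ`
(the columns of `Q₀`) for the eigenvalues `λ_1,...,λ_m`. -/
theorem stmt_4 (n N m : ℕ) (hmn : m ≤ n)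
    (Y : Matrix (Fin n) (Fin N) ℝ)
    (lam : Fin n → ℝ)
    (hmono : ∀ i j : Fin n, i ≤ j → lam j ≤ lam i)
    (hnonneg : ∀ i, 0 ≤ lam i)
    (V : Matrix (Fin n) (Fin n) ℝ) (hV : Vᵀ * V = 1)
    (hdiag : (Y * Yᵀ) * V = V * Matrix.diagonal lam) :
    IsLeast {r | ∃ Z : Matrix (Fin n) (Fin N) ℝ, Z.rank ≤ m ∧
        r = ∑ i, ∑ j, ((Y - Z) i j) ^ 2}
      (∑ i ∈ Finset.univ.filter (fun i : Fin n => m ≤ (i : ℕ)), lam i) ∧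
    (∀ Q₀ : Matrix (Fin n) (Fin m) ℝ, Q₀ᵀ * Q₀ = 1 →
      (∀ j : Fin m, (Y * Yᵀ).mulVec (fun i => Q₀ i j) =
        lam (Fin.castLE hmn j) • (fun i => Q₀ i j)) →
      (Q₀ * Q₀ᵀ * Y).rank ≤ m ∧
      ∑ i, ∑ j, ((Y - Q₀ * Q₀ᵀ * Y) i j) ^ 2 =
        ∑ i ∈ Finset.univ.filter (fun i : Fin n => m ≤ (i : ℕ)), lam i) := by
  have htop : ∀ t : Fin m, ∀ i ∈ (Finset.univ.map (Fin.castLEEmb hmn))ᶜ,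
      lam i ≤ lam (t.castLE hmn) := by
    rw [compl_map_castLEEmb]
    exact fun t i hi => hmono _ _ (t.isLt.le.trans (Finset.mem_filter.1 hi).2)
  have h := stmt_4_general Y V hV lam (eq_mul_mul_of_mul_eq_mul hV hdiag) (Fin.castLEEmb hmn) htop
  simp only [frobenius_norm_sq, Real.norm_eq_abs, sq_abs, compl_map_castLEEmb, Fintype.card_fin,
    conjTranspose_eq_transpose_of_trivial, RCLike.ofReal_real_eq_id, id_eq] at h
  exact h
end

section
/- Let C = Q Λ Q^T, where Q ∈ ℝ^{n×m} satisfies Q^T Q = I_m and Λ ∈ ℝ^{m×m} is an invertible diagonal matrix. Let E ∈ ℝ^{n×n}, and suppose t ↦ (Q(t), Λ(t)) ∈ ℝ^{n×m} × ℝ^{m×m} is defined on a neighborhood of 0 in ℝ, is differentiable at 0, and satisfies Q(0) = Q, Λ(0) = Λ, and (C + tE) Q(t) = Q(t) Λ(t) for all t in that neighborhood. Then (I_n − Q Q^T) Q'(0) = (I_n − Q Q^T) E Q Λ^{-1}, where Q'(0) denotes the derivative of Q(t) at t = 0. -/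
open Matrix

/-!
Multiplying `A(t) Q(t) = Q(t) Λ(t)` on the left by a matrix `P` that annihilates both `A(x)` and
`Q(x)`, and dividing by `t - x`, leaves `P (ΔA/Δt) Q(t) = P (ΔQ/Δt) Λ(t)`. No difference quotient of
`Λ` occurs, so only its limit matters, and this is forced by the equation itself: `Λ(t)` is obtained
by cancelling `Q(t)`, which stays left invertible near `x`. For `A(x) = Q(x) Λ R` with `R Q(x) = 1`,
the projection `P = 1 - Q(x) R` qualifies.
-/

open Filter Topology

section MatrixLimits

variable {X 𝕜 l m n : Type*} {F : Filter X}

theorem tendsto_matrix_mul [TopologicalSpace 𝕜] [NonUnitalNonAssocSemiring 𝕜]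
    [IsTopologicalSemiring 𝕜] [Fintype m]
    {M : X → Matrix l m 𝕜} {N : X → Matrix m n 𝕜} {M₀ : Matrix l m 𝕜} {N₀ : Matrix m n 𝕜}
    (hM : Tendsto M F (𝓝 M₀)) (hN : Tendsto N F (𝓝 N₀)) :
    Tendsto (fun t => M t * N t) F (𝓝 (M₀ * N₀)) :=
  ((continuous_fst.matrix_mul continuous_snd).tendsto (M₀, N₀)).comp (hM.prodMk_nhds hN)

variable [TopologicalSpace 𝕜] [Field 𝕜] [IsTopologicalDivisionRing 𝕜]
  [Fintype m] [DecidableEq m]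

theorem tendsto_matrix_inv {M : X → Matrix m m 𝕜} {M₀ : Matrix m m 𝕜}
    (hM : Tendsto M F (𝓝 M₀)) (hM₀ : IsUnit M₀) : Tendsto (fun t => (M t)⁻¹) F (𝓝 M₀⁻¹) := by
  have hdet : M₀.det ≠ 0 := ((isUnit_iff_isUnit_det M₀).1 hM₀).ne_zero
  have hinv : ContinuousAt Ring.inverse M₀.det := by
    simpa only [Ring.inverse_eq_inv'] using continuousAt_inv₀ hdet
  exact (continuousAt_matrix_inv M₀ hinv).tendsto.comp hM

theorem eventually_isUnit_matrix [T1Space 𝕜] {M : X → Matrix m m 𝕜} {M₀ : Matrix m m 𝕜}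
    (hM : Tendsto M F (𝓝 M₀)) (hM₀ : IsUnit M₀) : ∀ᶠ t in F, IsUnit (M t) := by
  have hdet : Tendsto (fun t => (M t).det) F (𝓝 M₀.det) :=
    (continuous_id.matrix_det.tendsto M₀).comp hM
  simp only [isUnit_iff_isUnit_det, isUnit_iff_ne_zero] at hM₀ ⊢
  exact hdet.eventually_ne hM₀

theorem tendsto_of_tendsto_matrix_mul_left [T1Space 𝕜] [Fintype n]
    {Q : X → Matrix n m 𝕜} {L : X → Matrix m l 𝕜} {Q₀ : Matrix n m 𝕜} {W : Matrix n l 𝕜}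
    {R : Matrix m n 𝕜} (hR : R * Q₀ = 1) (hQ : Tendsto Q F (𝓝 Q₀))
    (hQL : Tendsto (fun t => Q t * L t) F (𝓝 W)) : Tendsto L F (𝓝 (R * W)) := by
  have hRQ : Tendsto (fun t => R * Q t) F (𝓝 1) := hR ▸ tendsto_matrix_mul tendsto_const_nhds hQ
  have hcancel : ∀ᶠ t in F, (R * Q t)⁻¹ * (R * (Q t * L t)) = L t := by
    filter_upwards [eventually_isUnit_matrix hRQ isUnit_one] with t ht
    rw [← Matrix.mul_assoc R,
      nonsing_inv_mul_cancel_left _ _ ((isUnit_iff_isUnit_det _).1 ht)]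
  have hlim := tendsto_matrix_mul (tendsto_matrix_inv hRQ isUnit_one)
    (tendsto_matrix_mul (tendsto_const_nhds (x := R)) hQL)
  rw [inv_one, Matrix.one_mul] at hlim
  exact hlim.congr' hcancel

theorem tendsto_eigenvalue_matrix [T1Space 𝕜] [Fintype n]
    {A : X → Matrix n n 𝕜} {Q : X → Matrix n m 𝕜} {L : X → Matrix m m 𝕜}
    {Q₀ : Matrix n m 𝕜} {Λ : Matrix m m 𝕜} {R : Matrix m n 𝕜} (hR : R * Q₀ = 1)
    (hA : Tendsto A F (𝓝 (Q₀ * Λ * R))) (hQ : Tendsto Q F (𝓝 Q₀))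
    (heig : ∀ᶠ t in F, A t * Q t = Q t * L t) : Tendsto L F (𝓝 Λ) := by
  have hΛ : R * (Q₀ * Λ * R * Q₀) = Λ := by
    rw [Matrix.mul_assoc _ R, hR, Matrix.mul_one, ← Matrix.mul_assoc, hR, Matrix.one_mul]
  have hQL : Tendsto (fun t => Q t * L t) F (𝓝 (Q₀ * Λ * R * Q₀)) :=
    (tendsto_matrix_mul hA hQ).congr' heig
  simpa only [hΛ] using tendsto_of_tendsto_matrix_mul_left hR hQ hQL

end MatrixLimits

section MatrixDerivatives

variable {𝕜 m n : Type*} [NontriviallyNormedField 𝕜] [Finite n]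
  {M : 𝕜 → Matrix m n 𝕜} {M' : Matrix m n 𝕜} {x : 𝕜}

theorem hasDerivAt_matrix :
    HasDerivAt M M' x ↔ ∀ i j, HasDerivAt (fun t => M t i j) (M' i j) x :=
  letI := Fintype.ofFinite n
  hasDerivAt_pi.trans (forall_congr' fun _ => hasDerivAt_pi)

theorem tendsto_slope_matrix (hM : HasDerivAt M M' x) : Tendsto (slope M x) (𝓝[≠] x) (𝓝 M') :=
  tendsto_pi_nhds.2 fun i => tendsto_pi_nhds.2 fun j =>
    (hasDerivAt_matrix.1 hM i j).tendsto_slope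

theorem tendsto_nhdsNE_of_hasDerivAt_matrix (hM : HasDerivAt M M' x) :
    Tendsto M (𝓝[≠] x) (𝓝 (M x)) :=
  tendsto_pi_nhds.2 fun i => tendsto_pi_nhds.2 fun j =>
    (hasDerivAt_matrix.1 hM i j).continuousAt.continuousWithinAt

theorem hasDerivAt_matrix_add_smul (C E : Matrix m n 𝕜) (x : 𝕜) :
    HasDerivAt (fun t : 𝕜 => C + t • E) E x :=
  hasDerivAt_matrix.2 fun i j => by
    simpa using ((hasDerivAt_id x).mul_const (E i j)).const_add (C i j)

end MatrixDerivatives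

section Perturbation

theorem mul_slope_mul_eq_of_annihilates {𝕜 k m n : Type*} [Field 𝕜] [Fintype m] [Fintype n]
    {A : 𝕜 → Matrix n n 𝕜} {Q : 𝕜 → Matrix n m 𝕜} {L : Matrix m m 𝕜} {P : Matrix k n 𝕜} {x t : 𝕜}
    (hPA : P * A x = 0) (hPQ : P * Q x = 0) (heig : A t * Q t = Q t * L) :
    P * slope A x t * Q t = P * slope Q x t * L := by
  simp only [slope_def_module, Matrix.mul_smul, Matrix.smul_mul, Matrix.mul_sub, hPA, hPQ,
    sub_zero, Matrix.mul_assoc, heig]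

variable {𝕜 k m n : Type*} [NontriviallyNormedField 𝕜] [Fintype m] [Fintype n]
  {A : 𝕜 → Matrix n n 𝕜} {A' : Matrix n n 𝕜} {Q : 𝕜 → Matrix n m 𝕜} {Q' : Matrix n m 𝕜}
  {L : 𝕜 → Matrix m m 𝕜} {Λ : Matrix m m 𝕜} {x : 𝕜}

theorem mul_deriv_mul_eq_of_annihilates {P : Matrix k n 𝕜}
    (hPA : P * A x = 0) (hPQ : P * Q x = 0)
    (hA : HasDerivAt A A' x) (hQ : HasDerivAt Q Q' x) (hL : Tendsto L (𝓝[≠] x) (𝓝 Λ))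
    (heig : ∀ᶠ t in 𝓝[≠] x, A t * Q t = Q t * L t) :
    P * A' * Q x = P * Q' * Λ := by
  have hQx : Tendsto Q (𝓝[≠] x) (𝓝 (Q x)) := tendsto_nhdsNE_of_hasDerivAt_matrix hQ
  have hleft : Tendsto (fun t => P * slope A x t * Q t) (𝓝[≠] x) (𝓝 (P * A' * Q x)) :=
    tendsto_matrix_mul (tendsto_matrix_mul tendsto_const_nhds (tendsto_slope_matrix hA)) hQx
  have hright : Tendsto (fun t => P * slope Q x t * L t) (𝓝[≠] x) (𝓝 (P * Q' * Λ)) :=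
    tendsto_matrix_mul (tendsto_matrix_mul tendsto_const_nhds (tendsto_slope_matrix hQ)) hL
  exact tendsto_nhds_unique_of_eventuallyEq hleft hright
    (heig.mono fun _ ht => mul_slope_mul_eq_of_annihilates hPA hPQ ht)

variable [DecidableEq m] [DecidableEq n] {R : Matrix m n 𝕜}

theorem stmt_6_general (hR : R * Q x = 1) (hΛ : IsUnit Λ) (hAx : A x = Q x * Λ * R)
    (hA : HasDerivAt A A' x) (hQ : HasDerivAt Q Q' x)
    (heig : ∀ᶠ t in 𝓝[≠] x, A t * Q t = Q t * L t) :
    (1 - Q x * R) * Q' = (1 - Q x * R) * A' * Q x * Λ⁻¹ := by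
  have hPQ : (1 - Q x * R) * Q x = 0 := by
    rw [Matrix.sub_mul, Matrix.mul_assoc, hR, Matrix.one_mul, Matrix.mul_one, sub_self]
  have hPA : (1 - Q x * R) * A x = 0 := by
    rw [hAx, ← Matrix.mul_assoc, ← Matrix.mul_assoc, hPQ, Matrix.zero_mul, Matrix.zero_mul]
  have hA₀ : Tendsto A (𝓝[≠] x) (𝓝 (Q x * Λ * R)) :=
    hAx ▸ tendsto_nhdsNE_of_hasDerivAt_matrix hA
  have hL : Tendsto L (𝓝[≠] x) (𝓝 Λ) :=
    tendsto_eigenvalue_matrix hR hA₀ (tendsto_nhdsNE_of_hasDerivAt_matrix hQ) heig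
  rw [mul_deriv_mul_eq_of_annihilates hPA hPQ hA hQ hL heig,
    mul_nonsing_inv_cancel_right _ _ ((isUnit_iff_isUnit_det Λ).1 hΛ)]

end Perturbation

/-- First-order eigenvector perturbation identity: let `C = Q Λ Qᵀ` with
`Qᵀ Q = 1` and `Λ = diagonal d` invertible, let `E` be any `n × n` matrix, and
let `t ↦ (Q(t), Λ(t))` be differentiable at `0` (entrywise, with derivatives
`Q'` and `L'`), with `Q(0) = Q`, `Λ(0) = Λ`, and `(C + t E) Q(t) = Q(t) Λ(t)`
for all `t` near `0`.  Then `(I − Q Qᵀ) Q'(0) = (I − Q Qᵀ) E Q Λ⁻¹`. -/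
theorem stmt_6 (n m : ℕ)
    (Q : Matrix (Fin n) (Fin m) ℝ) (hQ : Qᵀ * Q = 1)
    (d : Fin m → ℝ) (hd : ∀ i, d i ≠ 0)
    (C : Matrix (Fin n) (Fin n) ℝ) (hC : C = Q * Matrix.diagonal d * Qᵀ)
    (E : Matrix (Fin n) (Fin n) ℝ)
    (Qf : ℝ → Matrix (Fin n) (Fin m) ℝ) (Lf : ℝ → Matrix (Fin m) (Fin m) ℝ)
    (Q' : Matrix (Fin n) (Fin m) ℝ) (L' : Matrix (Fin m) (Fin m) ℝ)
    (hQf0 : Qf 0 = Q) (hLf0 : Lf 0 = Matrix.diagonal d)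
    (hQdiff : ∀ i j, HasDerivAt (fun t => Qf t i j) (Q' i j) 0)
    (hLdiff : ∀ i j, HasDerivAt (fun t => Lf t i j) (L' i j) 0)
    (heig : ∀ᶠ t in nhds (0 : ℝ), (C + t • E) * Qf t = Qf t * Lf t) :
    (1 - Q * Qᵀ) * Q' = (1 - Q * Qᵀ) * E * Q * (Matrix.diagonal d)⁻¹ := by
  subst hQf0
  have hΛ : IsUnit (diagonal d) := isUnit_diagonal.2 (Pi.isUnit_iff.2 fun i => (hd i).isUnit)
  exact stmt_6_general hQ hΛ (by rw [zero_smul, add_zero, hC]) (hasDerivAt_matrix_add_smul C E 0)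
    (hasDerivAt_matrix.2 hQdiff) (heig.filter_mono nhdsWithin_le_nhds)
end

section
/- Let x_1,…,x_N ∈ ℝ^n and C = Σ_{k=1}^N x_k x_k^T, and suppose C = Q Λ Q^T where Q ∈ ℝ^{n×m} satisfies Q^T Q = I_m and Λ ∈ ℝ^{m×m} is an invertible diagonal matrix (so each x_k lies in the column space of Q). Fix indices k and i, let e_i denote the i-th standard basis vector of ℝ^n, and set E = e_i x_k^T + x_k e_i^T, which is the derivative of the perturbed covariance Σ_j (x_j + ε_j)(x_j + ε_j)^T with respect to the i-th coordinate of ε_k at ε = 0. Suppose t ↦ (Q(t), Λ(t)) is defined on a neighborhood of 0, is differentiable at 0, and satisfies Q(0) = Q, Λ(0) = Λ, and (C + tE) Q(t) = Q(t) Λ(t) for all t. Then (I_n − Q Q^T) Q'(0) = (I_n − Q Q^T) (e_i x_k^T) Q Λ^{-1}. -/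
/-!
Let `P = 1 - Q Qᵀ`. It annihilates `Q`, hence `C = Q Λ Qᵀ`; and since `P C Pᵀ = ∑ (P x_j)(P x_j)ᵀ`
is a sum of positive semidefinite terms, it annihilates every data point `x_k`, so that
`P E = P e_i x_kᵀ`. Multiplying `(C + t E) Q(t) = Q(t) Λ(t)` by `P` leaves
`P E Q(t) = t⁻¹ P (Q(t) - Q(0)) Λ(t)` for `t ≠ 0`, and `t → 0` gives `P E Q = P Q'(0) Λ`.
-/

open Matrix

section Algebra

variable {l m n ι R : Type*}

theorem one_sub_mul_mul_eq_zero_of_mul_eq_one [Fintype m] [Fintype n] [DecidableEq m]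
    [DecidableEq n] [Ring R] {A : Matrix n m R} {B : Matrix m n R} (h : B * A = 1) :
    (1 - A * B) * A = 0 := by
  rw [Matrix.sub_mul, Matrix.mul_assoc, h, Matrix.one_mul, Matrix.mul_one, sub_self]

theorem sum_vecMulVec_star_eq_mul_conjTranspose [Fintype ι] [NonUnitalNonAssocSemiring R] [Star R]
    (x : ι → n → R) :
    ∑ j, vecMulVec (x j) (star (x j)) = (of x)ᵀ * (of x)ᵀᴴ := by
  ext a b
  simp [Matrix.sum_apply, Matrix.mul_apply, vecMulVec_apply]

theorem mulVec_eq_zero_of_mul_sum_vecMulVec_star_eq_zero [Fintype n] [Fintype ι] [PartialOrder R]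
    [NonUnitalRing R] [StarRing R] [StarOrderedRing R] [NoZeroDivisors R]
    {P : Matrix l n R} {x : ι → n → R}
    (h : P * ∑ j, vecMulVec (x j) (star (x j)) = 0) (k : ι) : P *ᵥ x k = 0 := by
  rw [sum_vecMulVec_star_eq_mul_conjTranspose, mul_self_mul_conjTranspose_eq_zero] at h
  exact funext fun a => congrFun₂ h a k

end Algebra

section Perturbation

open Filter Topology

variable {𝕜 R l m n : Type*}

theorem tendsto_matrix_mul_s7 [Fintype m] [NonUnitalNonAssocSemiring R] [TopologicalSpace R]
    [ContinuousAdd R] [ContinuousMul R] {α : Type*} {f : Filter α}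
    {A : α → Matrix l m R} {B : α → Matrix m n R} {A₀ : Matrix l m R} {B₀ : Matrix m n R}
    (hA : Tendsto A f (𝓝 A₀)) (hB : Tendsto B f (𝓝 B₀)) :
    Tendsto (fun t => A t * B t) f (𝓝 (A₀ * B₀)) :=
  ((continuous_fst.matrix_mul continuous_snd).tendsto (A₀, B₀)).comp (hA.prodMk_nhds hB)

variable [NontriviallyNormedField 𝕜]

theorem tendsto_matrix_slope [NormedAddCommGroup R] [NormedSpace 𝕜 R]
    {A : 𝕜 → Matrix n m R} {A' : Matrix n m R} {t₀ : 𝕜}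
    (hA : ∀ a b, HasDerivAt (fun t => A t a b) (A' a b) t₀) :
    Tendsto (slope A t₀) (𝓝[≠] t₀) (𝓝 A') :=
  tendsto_pi_nhds.2 fun a => tendsto_pi_nhds.2 fun b => (hA a b).tendsto_slope

theorem mul_perturbation_mul_eq_mul_deriv_mul [NormedRing R] [NormedAlgebra 𝕜 R] [Fintype m]
    [Fintype n] {P : Matrix l n R} {C E : Matrix n n R}
    {Q : 𝕜 → Matrix n m R} {Q' : Matrix n m R} {Λ : 𝕜 → Matrix m m R}
    (hPC : P * C = 0) (hPQ : P * Q 0 = 0)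
    (hQ : ∀ a b, HasDerivAt (fun t => Q t a b) (Q' a b) 0) (hΛ : ContinuousAt Λ 0)
    (h : ∀ᶠ t in 𝓝 0, (C + t • E) * Q t = Q t * Λ t) :
    P * E * Q 0 = P * Q' * Λ 0 := by
  have hQ_cont : ContinuousAt Q 0 :=
    continuousAt_pi.2 fun a => continuousAt_pi.2 fun b => (hQ a b).continuousAt
  have h_left : Tendsto (fun t => P * E * Q t) (𝓝[≠] 0) (𝓝 (P * E * Q 0)) :=
    tendsto_matrix_mul_s7 tendsto_const_nhds (hQ_cont.mono_left nhdsWithin_le_nhds)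
  have h_right : Tendsto (fun t => P * slope Q 0 t * Λ t) (𝓝[≠] 0) (𝓝 (P * Q' * Λ 0)) :=
    tendsto_matrix_mul_s7 (tendsto_matrix_mul_s7 tendsto_const_nhds (tendsto_matrix_slope hQ))
      (hΛ.mono_left nhdsWithin_le_nhds)
  refine tendsto_nhds_unique_of_eventuallyEq h_left h_right ?_
  filter_upwards [nhdsWithin_le_nhds h, self_mem_nhdsWithin] with t ht ht0
  have h_proj : t • (P * E * Q t) = P * Q t * Λ t := by
    simpa only [Matrix.add_mul, Matrix.mul_add, Matrix.smul_mul, Matrix.mul_smul,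
      ← Matrix.mul_assoc, hPC, Matrix.zero_mul, zero_add] using congrArg (P * ·) ht
  rw [slope_def_module, sub_zero, Matrix.mul_smul, Matrix.mul_sub, hPQ, sub_zero, Matrix.smul_mul,
    ← h_proj, inv_smul_smul₀ ht0]

end Perturbation

theorem stmt_7_general {𝕜 m n ι : Type*} [RCLike 𝕜] [Fintype m] [Fintype n] [Fintype ι]
    [DecidableEq m] [DecidableEq n] (x : ι → n → 𝕜) (k : ι) (v : n → 𝕜)
    {C E : Matrix n n 𝕜} (hC : C = ∑ j, vecMulVec (x j) (star (x j)))
    (hE : E = vecMulVec v (star (x k)) + vecMulVec (x k) (star v))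
    {Q : Matrix n m 𝕜} (hQ : Qᴴ * Q = 1) {Λ : Matrix m m 𝕜} (hΛ : IsUnit Λ)
    (hCQ : C = Q * Λ * Qᴴ)
    {Qf : ℝ → Matrix n m 𝕜} {Λf : ℝ → Matrix m m 𝕜} {Q' : Matrix n m 𝕜}
    (hQf0 : Qf 0 = Q) (hΛf0 : Λf 0 = Λ)
    (hQf : ∀ a b, HasDerivAt (fun t => Qf t a b) (Q' a b) 0) (hΛf : ContinuousAt Λf 0)
    (heig : ∀ᶠ t in nhds (0 : ℝ), (C + t • E) * Qf t = Qf t * Λf t) :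
    (1 - Q * Qᴴ) * Q' = (1 - Q * Qᴴ) * vecMulVec v (star (x k)) * Q * Λ⁻¹ := by
  subst hQf0 hΛf0
  set P := 1 - Qf 0 * (Qf 0)ᴴ
  have hPQ : P * Qf 0 = 0 := one_sub_mul_mul_eq_zero_of_mul_eq_one hQ
  have hPC : P * C = 0 := by
    rw [hCQ, ← Matrix.mul_assoc, ← Matrix.mul_assoc, hPQ, Matrix.zero_mul, Matrix.zero_mul]
  have hPx : P *ᵥ x k = 0 :=
    open scoped ComplexOrder in mulVec_eq_zero_of_mul_sum_vecMulVec_star_eq_zero (hC ▸ hPC) k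
  have hPE : P * E = P * vecMulVec v (star (x k)) := by
    rw [hE, Matrix.mul_add, mul_vecMulVec _ (x k), hPx, zero_vecMulVec, add_zero]
  rw [← hPE, mul_perturbation_mul_eq_mul_deriv_mul hPC hPQ hQf hΛf heig,
    mul_nonsing_inv_cancel_right _ _ ((isUnit_iff_isUnit_det _).1 hΛ)]

/-- Proposition 2 of the paper (Eq. 9): with `C = Σ x_k x_kᵀ = Q Λ Qᵀ`
(`Qᵀ Q = 1`, `Λ = diagonal d` invertible), fixed indices `k, i`, and
`E = e_i x_kᵀ + x_k e_iᵀ` (the derivative of the perturbed covariance with respect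
to the `i`-th coordinate of `ε_k` at `ε = 0`), any family `t ↦ (Q(t), Λ(t))`,
differentiable at `0` with `Q(0) = Q`, `Λ(0) = Λ`, and
`(C + t E) Q(t) = Q(t) Λ(t)` near `0`, satisfies
`(I − Q Qᵀ) Q'(0) = (I − Q Qᵀ) (e_i x_kᵀ) Q Λ⁻¹`. -/
theorem stmt_7 (n m N : ℕ)
    (x : Fin N → Fin n → ℝ)
    (C : Matrix (Fin n) (Fin n) ℝ) (hC : C = ∑ k, vecMulVec (x k) (x k))
    (Q : Matrix (Fin n) (Fin m) ℝ) (hQ : Qᵀ * Q = 1)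
    (d : Fin m → ℝ) (hd : ∀ i, d i ≠ 0)
    (hCQ : C = Q * Matrix.diagonal d * Qᵀ)
    (k : Fin N) (i : Fin n)
    (E : Matrix (Fin n) (Fin n) ℝ)
    (hE : E = vecMulVec (Pi.single i 1) (x k) + vecMulVec (x k) (Pi.single i 1))
    (Qf : ℝ → Matrix (Fin n) (Fin m) ℝ) (Lf : ℝ → Matrix (Fin m) (Fin m) ℝ)
    (Q' : Matrix (Fin n) (Fin m) ℝ) (L' : Matrix (Fin m) (Fin m) ℝ)
    (hQf0 : Qf 0 = Q) (hLf0 : Lf 0 = Matrix.diagonal d)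
    (hQdiff : ∀ a b, HasDerivAt (fun t => Qf t a b) (Q' a b) 0)
    (hLdiff : ∀ a b, HasDerivAt (fun t => Lf t a b) (L' a b) 0)
    (heig : ∀ᶠ t in nhds (0 : ℝ), (C + t • E) * Qf t = Qf t * Lf t) :
    (1 - Q * Qᵀ) * Q' =
      (1 - Q * Qᵀ) * vecMulVec (Pi.single i 1) (x k) * Q * (Matrix.diagonal d)⁻¹ := by
  have hstar : star (Pi.single i 1 : Fin n → ℝ) = Pi.single i 1 := star_trivial _
  simpa [hstar] using stmt_7_general x k (Pi.single i 1) (by simpa using hC) (by simpa using hE)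
    (by simpa using hQ) (isUnit_diagonal.2 (Pi.isUnit_iff.2 fun j => (hd j).isUnit))
    (by simpa using hCQ) hQf0 hLf0 hQdiff
    (continuousAt_pi.2 fun a => continuousAt_pi.2 fun b => (hLdiff a b).continuousAt) heig
end
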